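/- Let G and H be connected graphs of order n₁ ≥ 2 and n₂ ≥ 2, respectively. If the diameter of H is at most 2, then pd(G⊙H) ≤ dim(G) + dim(H) + 2. -/

import Mathlib

/-!
Let `S` and `T` be minimum resolving sets of `G` and `H`. The vertices of `G ⊙ H` are partitioned
into the singletons `{s}` for `s ∈ S`, the rest of `G`, the cells `V × {t}` for `t ∈ T`, and the
rest of the copies of `H`; empty cells are discarded, so there are at most `|S| + |T| + 2` of them.

Two vertices in different cells are separated by their own cells. A vertex `a` of `G`, or one in
the `a`-th copy of `H`, lies at distance `d(a, s)`, respectively `d(a, s) + 1`, from `{s}`; hence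
the cells `{s}` determine `a`. Since `H` has diameter at most `2`, the vertex `w` in a copy of `H`
lies at distance `d(w, t)` from `V × {t}`: its own copy contains a point of this cell, and leaving
the copy cannot give a shorter path. Hence the cells `V × {t}` determine `w`.

The distances to cells are computed by `setDist_eq_of_potential`: a `1`-Lipschitz function
vanishing on a cell is a lower bound for the distance to it.
-/

open SimpleGraph

/-- The corona product `G ⊙ H`: one copy of `G`, one copy of `H` for each vertex of `G`,
with the `i`-th vertex of `G` joined to every vertex of the `i`-th copy of `H`. -/
def corona {α β : Type*} (G : SimpleGraph α) (H : SimpleGraph β) :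
    SimpleGraph (α ⊕ α × β) :=
  SimpleGraph.fromRel (fun x y =>
    match x, y with
    | Sum.inl a, Sum.inl b => G.Adj a b
    | Sum.inl a, Sum.inr iu => a = iu.1
    | Sum.inr iu, Sum.inr jw => iu.1 = jw.1 ∧ H.Adj iu.2 jw.2
    | _, _ => False)

/-- The distance from a vertex to a set of vertices: `d(v,A) = min_{u ∈ A} d(v,u)`. -/
noncomputable def setDist {α : Type*} (G : SimpleGraph α) (v : α) (A : Set α) : ℕ :=
  sInf (G.dist v '' A)

/-- `S` is a resolving set for `G`: distinct vertices have distinct metric representations. -/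
def IsResolvingSet {α : Type*} (G : SimpleGraph α) (S : Set α) : Prop :=
  ∀ u v : α, (∀ w ∈ S, G.dist u w = G.dist v w) → u = v

/-- The metric dimension of `G`: minimum cardinality of a resolving set. -/
noncomputable def metricDim {α : Type*} (G : SimpleGraph α) : ℕ :=
  sInf {k | ∃ S : Set α, IsResolvingSet G S ∧ S.ncard = k}

/-- A family of sets is a resolving partition for `G` if it is a partition of the vertex set
into nonempty cells and distinct vertices have distinct partition representations. -/
def IsResolvingPartition {α : Type*} (G : SimpleGraph α) (P : Set (Set α)) : Prop :=
  (∀ A ∈ P, A.Nonempty) ∧ (∀ v : α, ∃! A : Set α, A ∈ P ∧ v ∈ A) ∧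
    ∀ u v : α, (∀ A ∈ P, setDist G u A = setDist G v A) → u = v

/-- The partition dimension of `G`: minimum number of cells in a resolving partition. -/
noncomputable def partitionDim {α : Type*} (G : SimpleGraph α) : ℕ :=
  sInf {t | ∃ P : Set (Set α), IsResolvingPartition G P ∧ P.ncard = t}

/-- `c(H)`: the maximum cardinality of a connected component of `H` which is isomorphic to a
complete graph (i.e. whose vertex set is a clique). -/
noncomputable def maxCompleteComp {β : Type*} (H : SimpleGraph β) : ℕ :=
  sSup {k | ∃ C : H.ConnectedComponent, H.IsClique C.supp ∧ C.supp.ncard = k}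

/-- `β(H)`: the number of isolated vertices of `H`. -/
noncomputable def numIsolated {β : Type*} (H : SimpleGraph β) : ℕ :=
  Set.ncard {v : β | ∀ u, ¬ H.Adj v u}

/-- `α(H)`: the number of connected components of `H` of order greater than one. -/
noncomputable def numBigComp {β : Type*} (H : SimpleGraph β) : ℕ :=
  Set.ncard {C : H.ConnectedComponent | 1 < C.supp.ncard}

section Corona

variable {V W : Type*} {G : SimpleGraph V} {H : SimpleGraph W}

lemma corona_adj_inl_inl {a b : V} :
    (corona G H).Adj (Sum.inl a) (Sum.inl b) ↔ G.Adj a b := by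
  simp only [corona, SimpleGraph.fromRel_adj, ne_eq, Sum.inl.injEq]
  exact ⟨fun h => h.2.elim id fun h => h.symm, fun h => ⟨h.ne, Or.inl h⟩⟩

lemma corona_adj_inl_inr {a b : V} {w : W} :
    (corona G H).Adj (Sum.inl a) (Sum.inr (b, w)) ↔ a = b := by
  simp [corona, SimpleGraph.fromRel_adj]

lemma corona_adj_inr_inr {a b : V} {w x : W} :
    (corona G H).Adj (Sum.inr (a, w)) (Sum.inr (b, x)) ↔ a = b ∧ H.Adj w x := by
  simp only [corona, SimpleGraph.fromRel_adj, ne_eq, Sum.inr.injEq, Prod.mk.injEq]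
  constructor
  · rintro ⟨-, h | h⟩
    · exact h
    · exact ⟨h.1.symm, h.2.symm⟩
  · rintro ⟨h, h'⟩
    exact ⟨fun h'' => h'.ne h''.2, Or.inl ⟨h, h'⟩⟩

/-- The inclusion of `G` into its corona product with `H`. -/
def coronaInl (G : SimpleGraph V) (H : SimpleGraph W) : G →g corona G H where
  toFun := Sum.inl
  map_rel' h := corona_adj_inl_inl.2 h

/-- The inclusion of `H` into `G ⊙ H` as the copy attached to the vertex `a`. -/
def coronaInr (G : SimpleGraph V) (H : SimpleGraph W) (a : V) : H →g corona G H where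
  toFun w := Sum.inr (a, w)
  map_rel' h := corona_adj_inr_inr.2 ⟨rfl, h⟩

lemma corona_connected (hG : G.Connected) : (corona G H).Connected := by
  obtain ⟨a₀⟩ := hG.nonempty
  have key : ∀ x, (corona G H).Reachable x (Sum.inl a₀) := by
    have inl (a : V) : (corona G H).Reachable (Sum.inl a) (Sum.inl a₀) :=
      (hG.preconnected a a₀).map (coronaInl G H)
    rintro (a | ⟨a, w⟩)
    · exact inl a
    · exact (corona_adj_inl_inr.2 rfl : (corona G H).Adj (Sum.inl a) _).symm.reachable.trans (inl a)
  exact { preconnected := fun x y => (key x).trans (key y).symm, nonempty := ⟨Sum.inl a₀⟩ }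

end Corona

section General

variable {α : Type*} {G : SimpleGraph α}

/-- Graph homomorphisms out of a connected graph do not increase distances. Connectedness matters:
the junk distance `0` between unreachable vertices could grow. -/
lemma dist_hom_le {β : Type*} {K : SimpleGraph β} (hG : G.Connected) (f : G →g K) (u v : α) :
    K.dist (f u) (f v) ≤ G.dist u v := by
  obtain ⟨p, hp⟩ := hG.exists_walk_length_eq_dist u v
  rw [← hp, ← SimpleGraph.Walk.length_map f p]
  exact SimpleGraph.dist_le _

lemma potential_le_dist (hG : G.Connected) {φ : α → ℕ}
    (hφ : ∀ x y, G.Adj x y → φ x ≤ φ y + 1) (x y : α) : φ x ≤ φ y + G.dist x y := by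
  obtain ⟨p, hp⟩ := hG.exists_walk_length_eq_dist x y
  rw [← hp]
  clear hp
  induction p with
  | nil => simp
  | cons h p ih =>
    have := hφ _ _ h
    rw [SimpleGraph.Walk.length_cons]
    omega

/-- A `1`-Lipschitz function vanishing on `A` is the distance to `A` at every point `x` where some
`y ∈ A` attains it. -/
lemma setDist_eq_of_potential (hG : G.Connected) {φ : α → ℕ}
    (hφ : ∀ x y, G.Adj x y → φ x ≤ φ y + 1) {A : Set α} (hA : ∀ y ∈ A, φ y = 0)
    {x y : α} (hy : y ∈ A) (hxy : G.dist x y ≤ φ x) : setDist G x A = φ x := by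
  apply le_antisymm
  · exact (Nat.sInf_le (Set.mem_image_of_mem _ hy)).trans hxy
  · refine le_csInf ⟨_, y, hy, rfl⟩ ?_
    rintro _ ⟨z, hz, rfl⟩
    simpa [hA z hz] using potential_le_dist hG hφ x z

/-- A minimum resolving set exists: the whole vertex set is resolving, so the infimum defining the
metric dimension is attained. -/
lemma exists_resolvingSet (hG : G.Connected) :
    ∃ S : Set α, IsResolvingSet G S ∧ S.ncard = metricDim G :=
  Nat.sInf_mem (s := {k | ∃ S : Set α, IsResolvingSet G S ∧ S.ncard = k})
    ⟨_, Set.univ, fun u v h => by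
      have := h v trivial
      rw [SimpleGraph.dist_self] at this
      exact hG.dist_eq_zero_iff.1 this, rfl⟩

/-- The nonempty fibres of a colouring form a resolving partition as soon as they separate the
vertices of equal colour, because vertices of different colours are separated by their own cells. -/
lemma partitionDim_le_of_coloring (hG : G.Connected) {C : Type*} [Finite C] (f : α → C)
    (hf : ∀ u v, f u = f v →
      (∀ x, setDist G u (f ⁻¹' {f x}) = setDist G v (f ⁻¹' {f x})) → u = v) :
    partitionDim G ≤ Nat.card C := by
  set P : Set (Set α) := (fun c => f ⁻¹' {c}) '' Set.range f with hP
  have hres : IsResolvingPartition G P := by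
    refine ⟨?_, ?_, ?_⟩
    · rintro _ ⟨_, ⟨x, rfl⟩, rfl⟩
      exact ⟨x, rfl⟩
    · intro v
      refine ⟨f ⁻¹' {f v}, ⟨⟨_, ⟨v, rfl⟩, rfl⟩, rfl⟩, ?_⟩
      rintro _ ⟨⟨_, ⟨x, rfl⟩, rfl⟩, hx⟩
      rw [show f v = f x from hx]
    · intro u v h
      have h' : ∀ x, setDist G u (f ⁻¹' {f x}) = setDist G v (f ⁻¹' {f x}) :=
        fun x => h _ ⟨_, ⟨x, rfl⟩, rfl⟩
      refine hf u v ?_ h'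
      have hu : setDist G u (f ⁻¹' {f u}) = 0 :=
        Nat.le_zero.1 (Nat.sInf_le ⟨u, rfl, SimpleGraph.dist_self⟩)
      rw [h' u] at hu
      obtain ⟨z, hz, hz'⟩ : setDist G v (f ⁻¹' {f u}) ∈ G.dist v '' (f ⁻¹' {f u}) :=
        Nat.sInf_mem ⟨_, u, rfl, rfl⟩
      rw [hu] at hz'
      rw [hG.dist_eq_zero_iff.1 hz']
      exact (show f z = f u from hz).symm
  calc partitionDim G ≤ P.ncard := Nat.sInf_le ⟨P, hres, rfl⟩
    _ ≤ (Set.range f).ncard := Set.ncard_image_le (Set.toFinite _)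
    _ ≤ (Set.univ : Set C).ncard := Set.ncard_le_ncard (Set.subset_univ _) (Set.toFinite _)
    _ = Nat.card C := Set.ncard_univ C

end General

open Classical in
/-- The colouring of `G ⊙ H` whose fibres are the cells of the partition: `some s` and `some t`
mark the cells `{s}` and `V × {t}`, and the two `none`s mark the remaining vertices of `G` and of
the copies of `H`. -/
noncomputable def coronaColor {V W : Type*} (S : Set V) (T : Set W) :
    V ⊕ V × W → Option S ⊕ Option T
  | Sum.inl a => Sum.inl (if h : a ∈ S then some ⟨a, h⟩ else none)
  | Sum.inr p => Sum.inr (if h : p.2 ∈ T then some ⟨p.2, h⟩ else none)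

section Cells

variable {V W : Type*} {G : SimpleGraph V} {H : SimpleGraph W} {S : Set V} {T : Set W}

lemma coronaColor_fiber_inl {s : V} (hs : s ∈ S) :
    coronaColor S T ⁻¹' {coronaColor S T (Sum.inl s)} = {Sum.inl s} := by
  ext x
  rcases x with a | p
  · by_cases ha : a ∈ S <;> simp [coronaColor, hs, ha]
    rintro rfl
    exact ha hs
  · simp [coronaColor]

lemma coronaColor_fiber_inr {a : V} {t : W} (ht : t ∈ T) :
    coronaColor S T ⁻¹' {coronaColor S T (Sum.inr (a, t))} = {x | ∃ b, x = Sum.inr (b, t)} := by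
  ext x
  rcases x with b | ⟨b, w⟩
  · simp [coronaColor]
  · by_cases hw : w ∈ T <;> simp [coronaColor, ht, hw]
    rintro rfl
    exact hw ht

/-- The distance to the vertex `s` of `G`, as a function on `G ⊙ H`. -/
noncomputable def potentialInl (G : SimpleGraph V) (W : Type*) (s : V) : V ⊕ V × W → ℕ
  | Sum.inl a => G.dist a s
  | Sum.inr p => G.dist p.1 s + 1

lemma setDist_singleton_inl (hG : G.Connected) (s : V) (x : V ⊕ V × W) :
    setDist (corona G H) x {Sum.inl s} = potentialInl G W s x := by
  have hinl (a : V) : (corona G H).dist (Sum.inl a) (Sum.inl s) ≤ G.dist a s :=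
    dist_hom_le hG (coronaInl G H) a s
  have hadj {a b : V} (h : G.Adj a b) : G.dist a s ≤ G.dist b s + 1 := by
    have := hG.dist_triangle (u := a) (v := b) (w := s)
    rw [SimpleGraph.dist_eq_one_iff_adj.2 h] at this
    omega
  refine setDist_eq_of_potential (corona_connected hG) ?_ ?_ (Set.mem_singleton (Sum.inl s)) ?_
  · rintro (a | ⟨a, w⟩) (b | ⟨b, z⟩) h
    · exact hadj (corona_adj_inl_inl.1 h)
    · obtain rfl := corona_adj_inl_inr.1 h
      simp only [potentialInl]
      omega
    · obtain rfl := corona_adj_inl_inr.1 h.symm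
      simp only [potentialInl]
      omega
    · obtain ⟨rfl, -⟩ := corona_adj_inr_inr.1 h
      simp only [potentialInl]
      omega
  · rintro _ rfl
    simp [potentialInl]
  · rcases x with a | ⟨a, w⟩
    · exact hinl a
    · have h : (corona G H).Adj (Sum.inr (a, w)) (Sum.inl a) := (corona_adj_inl_inr.2 rfl).symm
      have h' := (corona_connected (H := H) hG).dist_triangle
        (u := Sum.inr (a, w)) (v := Sum.inl a) (w := Sum.inl s)
      rw [SimpleGraph.dist_eq_one_iff_adj.2 h] at h'
      have := hinl a
      simp only [potentialInl]
      omega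

/-- The distance to the cell `V × {t}`, as a function on `G ⊙ H`. -/
noncomputable def potentialInr (V : Type*) (H : SimpleGraph W) (t : W) : V ⊕ V × W → ℕ
  | Sum.inl _ => 1
  | Sum.inr p => H.dist p.2 t

lemma setDist_layer_inr (hG : G.Connected) (hH : H.Connected) (hd : ∀ w z, H.dist w z ≤ 2)
    (t : W) (a : V) (w : W) :
    setDist (corona G H) (Sum.inr (a, w)) {x | ∃ b, x = Sum.inr (b, t)} = H.dist w t := by
  refine setDist_eq_of_potential (φ := potentialInr V H t) (corona_connected hG) ?_ ?_
    (⟨a, rfl⟩ : (Sum.inr (a, t) : V ⊕ V × W) ∈ {x | ∃ b, x = Sum.inr (b, t)})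
    (dist_hom_le hH (coronaInr G H a) w t)
  · rintro (a | ⟨a, w⟩) (b | ⟨b, z⟩) h
    · simp [potentialInr]
    · simp [potentialInr]
    -- a vertex of a copy of `H` and its apex: here the diameter bound is needed
    · exact hd w t
    · have h' := (corona_adj_inr_inr.1 h).2
      have := hH.dist_triangle (u := w) (v := z) (w := t)
      rw [SimpleGraph.dist_eq_one_iff_adj.2 h'] at this
      simp only [potentialInr]
      omega
  · rintro _ ⟨b, rfl⟩
    simp [potentialInr]

end Cells

/-- For connected graphs `G` and `H` of orders `n₁ ≥ 2` and `n₂ ≥ 2`, if the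
diameter of `H` is at most `2`, then `pd(G⊙H) ≤ dim(G) + dim(H) + 2`. -/
theorem stmt4 {V W : Type*} [Fintype V] [Fintype W] (G : SimpleGraph V) (H : SimpleGraph W)
    (h₁ : 2 ≤ Fintype.card V) (h₂ : 2 ≤ Fintype.card W)
    (hG : G.Connected) (hH : H.Connected) (hd : H.diam ≤ 2) :
    partitionDim (corona G H) ≤ metricDim G + metricDim H + 2 := by
  obtain ⟨S, hS, hSc⟩ := exists_resolvingSet hG
  obtain ⟨T, hT, hTc⟩ := exists_resolvingSet hH
  -- `diam` would be the junk value `0` if `ediam` were infinite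
  have hd' : ∀ w z, H.dist w z ≤ 2 := fun w z => by
    have := hH.nonempty
    exact (SimpleGraph.dist_le_diam (SimpleGraph.connected_iff_ediam_ne_top.1 hH)).trans hd
  have hcard : Nat.card (Option S ⊕ Option T) = metricDim G + metricDim H + 2 := by
    rw [Nat.card_sum, Finite.card_option, Finite.card_option, Nat.card_coe_set_eq,
      Nat.card_coe_set_eq, hSc, hTc]
    omega
  rw [← hcard]
  refine partitionDim_le_of_coloring (corona_connected hG) (coronaColor S T) ?_
  intro u v huv h
  have hs : ∀ s ∈ S, potentialInl G W s u = potentialInl G W s v := fun s hs => by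
    have := h (Sum.inl s)
    rwa [coronaColor_fiber_inl hs, setDist_singleton_inl hG, setDist_singleton_inl hG] at this
  rcases u with a | ⟨a, w⟩ <;> rcases v with b | ⟨b, z⟩
  · exact congrArg Sum.inl (hS a b hs)
  · simp [coronaColor] at huv
  · simp [coronaColor] at huv
  · obtain rfl : a = b := hS a b fun s hs' => Nat.succ_injective (hs s hs')
    obtain rfl : w = z := hT w z fun t ht => by
      have := h (Sum.inr (a, t))
      rwa [coronaColor_fiber_inr ht, setDist_layer_inr hG hH hd', setDist_layer_inr hG hH hd']
        at this
    rfl
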